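/- arXiv:hep-th/9812140 — 3 statements merged into one kernel-verified Lean document; each statement's English description precedes it below -/
import Mathlib

section
/- D ∘ D = 0, ker D = k[x] × {0}, im D = (x^{r+1}) × {0}, and the map p ↦ p mod (x^{r+1}) induces a k[x]-module isomorphism ker D / im D ≅ k[x]/(x^{r+1}); i.e. the invariant cohomology of d for Chapline–Manton model 2 is the quotient of the algebra generated by F by the ideal generated by F^{r+1}. -/
/- Context: `k` a field, `r ≥ 1`, `M = k[x] × k[x]`, where `(p, q)` encodes
`p(F) + q(F)·H` in `k[F] ⊗ Λ(H)`; `D(p, q) = (x^{r+1}·q, 0)` encodes the exterior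
derivative on the small invariant algebra of Chapline–Manton model 2 (Bianchi identities
`dF = 0`, `dH = F^{r+1}`). -/

open LinearMap Polynomial

noncomputable section

variable (k : Type*) [Field k] (r : ℕ)

/-- The differential `D(p, q) = (x^{r+1}·q, 0)` on `M = k[x] × k[x]`. -/
def Dcm2 : (Polynomial k × Polynomial k) →ₗ[Polynomial k] (Polynomial k × Polynomial k) :=
  (((X : Polynomial k) ^ (r + 1)) •
      LinearMap.snd (Polynomial k) (Polynomial k) (Polynomial k)).prod 0

section

variable {R M N : Type*} [Ring R] [AddCommGroup M] [AddCommGroup N] [Module R M] [Module R N]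

/-- The differential `(m, n) ↦ (φ n, 0)` of the two-term complex `φ : N → M`, acting on the total
module `M × N`. The differential `Dcm2` is the case where `φ` is multiplication by `x^{r+1}`. -/
def twoTermDifferential (φ : N →ₗ[R] M) : M × N →ₗ[R] M × N :=
  inl R M N ∘ₗ φ ∘ₗ snd R M N

namespace twoTermDifferential

variable (φ : N →ₗ[R] M)

theorem comp_self : twoTermDifferential φ ∘ₗ twoTermDifferential φ = 0 := by
  ext <;> simp [twoTermDifferential]

theorem ker_eq_prod : ker (twoTermDifferential φ) = (⊤ : Submodule R M).prod (ker φ) := by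
  rw [twoTermDifferential, ker_comp_of_ker_eq_bot _ Submodule.ker_inl, ker_comp,
    Submodule.comap_snd]

theorem range_eq_prod : range (twoTermDifferential φ) = (range φ).prod (⊥ : Submodule R N) := by
  rw [twoTermDifferential, range_comp, range_comp_of_range_eq_top _ Submodule.range_snd,
    Submodule.map_inl]

/-- The map `ker D → M / im φ`, `(m, n) ↦ m mod im φ`, for `D = twoTermDifferential φ`. For
injective `φ` it induces the isomorphism `cohomologyEquiv`. -/
def kerToQuotient : ker (twoTermDifferential φ) →ₗ[R] M ⧸ range φ :=
  (range φ).mkQ ∘ₗ fst R M N ∘ₗ (ker (twoTermDifferential φ)).subtype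

theorem kerToQuotient_surjective : Function.Surjective (kerToQuotient φ) := by
  intro y
  obtain ⟨m, rfl⟩ := (range φ).mkQ_surjective y
  have inl_mem_ker : (m, 0) ∈ ker (twoTermDifferential φ) := by simp [ker_eq_prod]
  exact ⟨⟨(m, 0), inl_mem_ker⟩, rfl⟩

variable {φ}

theorem ker_eq_prod_bot (hφ : Function.Injective φ) :
    ker (twoTermDifferential φ) = (⊤ : Submodule R M).prod ⊥ := by
  rw [ker_eq_prod, ker_eq_bot.mpr hφ]

theorem ker_kerToQuotient (hφ : Function.Injective φ) :
    ker (kerToQuotient φ) =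
      (range (twoTermDifferential φ)).comap (ker (twoTermDifferential φ)).subtype := by
  ext ⟨⟨m, n⟩, hmn⟩
  have hn : n = 0 := by simpa [ker_eq_prod_bot hφ] using hmn
  simp [kerToQuotient, range_eq_prod, hn]

/-- The cohomology `ker D / im D` of `D = twoTermDifferential φ`, for injective `φ`, identified
with `M / im φ` through the first component. -/
def cohomologyEquiv (hφ : Function.Injective φ) :
    (ker (twoTermDifferential φ) ⧸
        (range (twoTermDifferential φ)).comap (ker (twoTermDifferential φ)).subtype) ≃ₗ[R]
      M ⧸ range φ :=
  Submodule.quotEquivOfEq _ _ (ker_kerToQuotient hφ).symm ≪≫ₗ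
    (kerToQuotient φ).quotKerEquivOfSurjective (kerToQuotient_surjective φ)

theorem cohomologyEquiv_mkQ (hφ : Function.Injective φ) (z : ker (twoTermDifferential φ)) :
    cohomologyEquiv hφ (Submodule.mkQ _ z) = (range φ).mkQ z.1.1 :=
  rfl

end twoTermDifferential

end

open twoTermDifferential in
theorem statement10_general {R : Type*} [CommRing R] {a : R} (ha : IsRegular a) :
    let D := twoTermDifferential (LinearMap.mul R R a)
    D ∘ₗ D = 0 ∧
    ker D = (⊤ : Submodule R R).prod ⊥ ∧
    range D = Submodule.prod (Ideal.span {a}) (⊥ : Submodule R R) ∧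
    ∃ e : (ker D ⧸ (range D).comap (ker D).subtype) ≃ₗ[R] (R ⧸ Ideal.span {a}),
      ∀ (p : R) (hp : (p, 0) ∈ ker D),
        e (((range D).comap (ker D).subtype).mkQ ⟨(p, 0), hp⟩) =
          Ideal.Quotient.mk (Ideal.span {a}) p := by
  have mul_injective : Function.Injective (LinearMap.mul R R a) := ha.left
  rw [← Ideal.range_mul' a]
  exact ⟨comp_self _, ker_eq_prod_bot mul_injective, range_eq_prod _,
    cohomologyEquiv mul_injective, fun p hp => cohomologyEquiv_mkQ mul_injective ⟨(p, 0), hp⟩⟩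

theorem Dcm2_eq_twoTermDifferential :
    Dcm2 k r = twoTermDifferential (LinearMap.mul k[X] k[X] (X ^ (r + 1))) :=
  rfl

/-- `D ∘ D = 0`, `ker D = k[x] × {0}`, `im D = (x^{r+1}) × {0}`, and
`p ↦ p mod (x^{r+1})` induces a `k[x]`-module isomorphism
`ker D / im D ≅ k[x]/(x^{r+1})`: the invariant cohomology of `d` for Chapline–Manton
model 2 is the quotient of the algebra generated by `F` by the ideal generated by
`F^{r+1}`. -/
theorem statement10 (hr : 1 ≤ r) :
    Dcm2 k r ∘ₗ Dcm2 k r = 0 ∧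
    ker (Dcm2 k r) = (⊤ : Submodule (Polynomial k) (Polynomial k)).prod ⊥ ∧
    range (Dcm2 k r) =
      Submodule.prod (Ideal.span {(X : Polynomial k) ^ (r + 1)}) (⊥ : Submodule (Polynomial k) (Polynomial k)) ∧
    ∃ e : (ker (Dcm2 k r) ⧸ (range (Dcm2 k r)).comap (ker (Dcm2 k r)).subtype)
        ≃ₗ[Polynomial k] (Polynomial k ⧸ Ideal.span {(X : Polynomial k) ^ (r + 1)}),
      ∀ (p : Polynomial k) (hp : ((p, 0) : Polynomial k × Polynomial k) ∈ ker (Dcm2 k r)),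
        e (((range (Dcm2 k r)).comap (ker (Dcm2 k r)).subtype).mkQ ⟨(p, 0), hp⟩) =
          Ideal.Quotient.mk (Ideal.span {(X : Polynomial k) ^ (r + 1)}) p := by
  rw [Dcm2_eq_twoTermDifferential]
  exact statement10_general (isRegular_X_pow (r + 1))

end
end

section
/- (i) The kernel of D is exactly the image of the k-algebra homomorphism k[t] → k[x, z] sending t to z − x²/2, i.e. ker D = k[z − x²/2]; (ii) D is surjective. Consequently the invariant cohomology of d for Chapline–Manton model 3 is the polynomial algebra in the single variable G_M = G − F²/2. -/
/- Context: `k` a field of characteristic zero, `k[x, z]` the polynomial ring in two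
variables (`x = X 0`, `z = X 1`), and `D = ∂/∂x + x·∂/∂z` the unique `k`-linear derivation
with `Dx = 1`, `Dz = x`.  (In Chapline–Manton model 3, with Bianchi identities `dF = −H`,
`dH = 0`, `dG = −FH`, the exterior derivative on the small invariant algebra reduces on
polynomials in `x = F`, `z = G` to the cocycle condition `Dp = 0` and coboundary condition
`p ∈ im D`.) -/

open MvPolynomial

noncomputable section

variable (k : Type*) [Field k] [CharZero k]

/-- The derivation `D = ∂/∂x + x·∂/∂z` of `k[x, z]`, with `Dx = 1`, `Dz = x`. -/
def Dcm3 : Derivation k (MvPolynomial (Fin 2) k) (MvPolynomial (Fin 2) k) :=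
  pderiv 0 + (X 0 : MvPolynomial (Fin 2) k) • pderiv 1

/-!
If `D s = 1` and `D` kills the image of `φ : A → B`, then `D` acts on the expressions `f(s)`,
`f ∈ A[X]`, as `d/ds`. When these exhaust `B`, as they do for `B = k[x, z]`, `s = x` and
`A = k[z - x²/2]`, surjectivity of `D` is integration of polynomials. Moreover `s` satisfies no
polynomial relation over the constants, since differentiating one would produce a relation of
smaller degree; hence `D (f(s)) = 0` forces `df/ds = 0`, i.e. `f(s)` comes from `A`.
-/

theorem derivative_surjective {A : Type*} [Semiring A] [Algebra ℚ A] :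
    Function.Surjective (Polynomial.derivative : Polynomial A → Polynomial A) := by
  intro f
  induction f using Polynomial.induction_on' with
  | add f g hf hg =>
    obtain ⟨F, rfl⟩ := hf
    obtain ⟨G, rfl⟩ := hg
    exact ⟨F + G, Polynomial.derivative_add⟩
  | monomial n a =>
    have hn : algebraMap ℚ A (n + 1)⁻¹ * (n + 1) = 1 := by
      rw [← map_natCast (algebraMap ℚ A) n, ← map_one (algebraMap ℚ A), ← map_add, ← map_mul,
        inv_mul_cancel₀ n.cast_add_one_ne_zero]
    refine ⟨Polynomial.monomial (n + 1) (a * algebraMap ℚ A (n + 1)⁻¹), ?_⟩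
    rw [Polynomial.derivative_monomial, Nat.cast_add_one, mul_assoc, hn, mul_one,
      Nat.add_sub_cancel]

section Slice

variable {R A B : Type*} [CommSemiring R] [CommSemiring A] [CommRing B] [Algebra R B]
  {D : Derivation R B B} {φ : A →+* B} {s : B}

theorem derivation_eval₂ (hφ : ∀ a, D (φ a) = 0) (hs : D s = 1) (f : Polynomial A) :
    D (f.eval₂ φ s) = f.derivative.eval₂ φ s := by
  induction f using Polynomial.induction_on' with
  | add f g hf hg => simp only [Polynomial.eval₂_add, map_add, hf, hg]
  | monomial n a =>
    simp [Polynomial.eval₂_monomial, Polynomial.derivative_monomial, hφ, hs, mul_assoc]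

theorem derivation_surjective_of_slice [Algebra ℚ A] (hφ : ∀ a, D (φ a) = 0) (hs : D s = 1)
    (hgen : Function.Surjective (Polynomial.eval₂ φ s)) : Function.Surjective D := by
  intro b
  obtain ⟨f, rfl⟩ := hgen b
  obtain ⟨F, rfl⟩ := derivative_surjective f
  exact ⟨F.eval₂ φ s, derivation_eval₂ hφ hs F⟩

variable [IsAddTorsionFree B]

theorem map_eq_C_of_map_derivative_eq_zero {f : Polynomial A} (hf : f.derivative.map φ = 0) :
    f.map φ = Polynomial.C (φ (f.coeff 0)) := by
  rw [← Polynomial.derivative_map] at hf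
  rw [Polynomial.eq_C_of_derivative_eq_zero hf, Polynomial.coeff_map]

theorem eval₂_eq_of_map_derivative_eq_zero {f : Polynomial A} (hf : f.derivative.map φ = 0) :
    f.eval₂ φ s = φ (f.coeff 0) := by
  rw [← Polynomial.eval_map, map_eq_C_of_map_derivative_eq_zero hf, Polynomial.eval_C]

theorem map_eq_zero_of_eval₂_slice_eq_zero (hφ : ∀ a, D (φ a) = 0) (hs : D s = 1)
    (f : Polynomial A) (hf : f.eval₂ φ s = 0) : f.map φ = 0 := by
  induction hn : f.natDegree using Nat.strong_induction_on generalizing f with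
  | _ n ih =>
    have hder : f.derivative.map φ = 0 := by
      by_cases hdeg : f.natDegree = 0
      · rw [Polynomial.derivative_of_natDegree_zero hdeg, Polynomial.map_zero]
      · have hroot : f.derivative.eval₂ φ s = 0 := by
          rw [← derivation_eval₂ hφ hs, hf, map_zero]
        exact ih _ (hn ▸ Polynomial.natDegree_derivative_lt hdeg) _ hroot rfl
    rw [map_eq_C_of_map_derivative_eq_zero hder,
      ← eval₂_eq_of_map_derivative_eq_zero (s := s) hder, hf, Polynomial.C_0]

theorem derivation_eq_zero_iff_of_slice (hφ : ∀ a, D (φ a) = 0) (hs : D s = 1)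
    (hgen : Function.Surjective (Polynomial.eval₂ φ s)) (b : B) :
    D b = 0 ↔ ∃ a, φ a = b := by
  constructor
  · intro hb
    obtain ⟨f, rfl⟩ := hgen b
    rw [derivation_eval₂ hφ hs] at hb
    have hder := map_eq_zero_of_eval₂_slice_eq_zero hφ hs _ hb
    exact ⟨f.coeff 0, (eval₂_eq_of_map_derivative_eq_zero hder).symm⟩
  · rintro ⟨a, rfl⟩
    exact hφ a

end Slice

section Triangular

variable {R : Type*} [CommRing R] (q : Polynomial R)

theorem eval₂_aeval_X_sub_surjective :
    Function.Surjective (Polynomial.eval₂ (Polynomial.aeval (R := R)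
      (X 1 - Polynomial.aeval (X 0) q : MvPolynomial (Fin 2) R)).toRingHom (X 0)) := by
  set φ := (Polynomial.aeval (R := R)
    (X 1 - Polynomial.aeval (X 0) q : MvPolynomial (Fin 2) R)).toRingHom with hφ
  have hC : φ.comp Polynomial.C = algebraMap R _ := by
    ext1 a
    simp [hφ]
  have hz : (Polynomial.C Polynomial.X + q.map Polynomial.C).eval₂ φ (X 0) = X 1 := by
    rw [Polynomial.eval₂_add, Polynomial.eval₂_C, Polynomial.eval₂_map, hC,
      ← Polynomial.aeval_def]
    simp [hφ]
  -- `x ↦ X`, `z ↦ u + q(X)` is the inverse substitution, with `u` the variable of `R[u]`.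
  let ψ : MvPolynomial (Fin 2) R →ₐ[R] Polynomial (Polynomial R) :=
    aeval ![Polynomial.X, Polynomial.C Polynomial.X + q.map Polynomial.C]
  have hinv : (Polynomial.eval₂RingHom φ (X 0)).comp ψ.toRingHom = RingHom.id _ := by
    refine ringHom_ext (fun a => ?_) fun i => ?_
    · simp [ψ, hφ, algebraMap_eq]
    · fin_cases i
      · simp [ψ]
      · simpa [ψ] using hz
  exact fun p => ⟨ψ p, RingHom.congr_fun hinv p⟩

theorem derivation_X_sub_aeval_eq_zero
    {D : Derivation R (MvPolynomial (Fin 2) R) (MvPolynomial (Fin 2) R)} (hx : D (X 0) = 1)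
    (hz : D (X 1) = Polynomial.aeval (X 0) q.derivative) :
    D (X 1 - Polynomial.aeval (X 0) q) = 0 := by
  rw [map_sub, hz, Derivation.map_aeval, hx, smul_eq_mul, mul_one, sub_self]

theorem statement12_general [Algebra ℚ R]
    (D : Derivation R (MvPolynomial (Fin 2) R) (MvPolynomial (Fin 2) R)) (hx : D (X 0) = 1)
    (hz : D (X 1) = Polynomial.aeval (X 0) q.derivative) :
    (∀ p : MvPolynomial (Fin 2) R, D p = 0 ↔
      ∃ f : Polynomial R, Polynomial.aeval (X 1 - Polynomial.aeval (X 0) q) f = p) ∧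
    Function.Surjective D := by
  have : IsAddTorsionFree (MvPolynomial (Fin 2) R) := .of_module_rat _
  have hconst (f : Polynomial R) :
      D (Polynomial.aeval (X 1 - Polynomial.aeval (X 0) q) f) = 0 := by
    rw [Derivation.map_aeval, derivation_X_sub_aeval_eq_zero q hx hz, smul_zero]
  exact ⟨derivation_eq_zero_iff_of_slice hconst hx (eval₂_aeval_X_sub_surjective q),
    derivation_surjective_of_slice hconst hx (eval₂_aeval_X_sub_surjective q)⟩

end Triangular

theorem derivative_C_inv_two_mul_X_sq {K : Type*} [Field K] [NeZero (2 : K)] :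
    (Polynomial.C (2⁻¹ : K) * Polynomial.X ^ 2).derivative = Polynomial.X := by
  rw [Polynomial.derivative_C_mul_X_pow, Nat.cast_ofNat, inv_mul_cancel₀ two_ne_zero,
    Polynomial.C_1, one_mul, pow_one]

theorem Dcm3_X_zero {K : Type*} [Field K] : Dcm3 K (X 0) = 1 := by
  simp [Dcm3, pderiv_X]

theorem Dcm3_X_one {K : Type*} [Field K] : Dcm3 K (X 1) = X 0 := by
  simp [Dcm3, pderiv_X]

/-- (i) `ker D` is exactly the image of the `k`-algebra homomorphism
`k[t] → k[x, z]` sending `t ↦ z − x²/2`, i.e. `ker D = k[z − x²/2]`; (ii) `D` is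
surjective.  Consequently the invariant cohomology of `d` for Chapline–Manton model 3 is
the polynomial algebra in the single variable `G_M = G − F²/2`. -/
theorem statement12 :
    (∀ p : MvPolynomial (Fin 2) k, Dcm3 k p = 0 ↔
      ∃ f : Polynomial k,
        Polynomial.aeval ((X 1 : MvPolynomial (Fin 2) k) - C (2⁻¹ : k) * X 0 ^ 2) f = p) ∧
    Function.Surjective (Dcm3 k) := by
  have hz : Dcm3 k (X 1) = Polynomial.aeval (X 0)
      (Polynomial.C (2⁻¹ : k) * Polynomial.X ^ 2).derivative := by
    rw [derivative_C_inv_two_mul_X_sq, Polynomial.aeval_X, Dcm3_X_one]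
  simpa [algebraMap_eq] using statement12_general _ (Dcm3 k) Dcm3_X_zero hz

end
end

section
/- In A one has γ(A₁₀B₀₂ + A₀₁B₁₁) + d(A₀₁B₀₂) = 0, and d(A₁₀B₀₂ + A₀₁B₁₁) + γ(A₁₀B₁₁ + A₀₁B₂₀) = F·B₀₂. (Thus the ghost-number-three γ-cocycle A₀₁B₀₂ can be lifted once, and the obstruction to lifting it a second time is the nontrivial γ-cocycle F·B₀₂.) -/
/- Context: the 'small algebra' `A = ℚ[B₂₀, B₁₁, B₀₂, F, E] ⊗ Λ(A₁₀, A₀₁, H, K, L)` of a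
free 1-form gauge field `A₁₀` (ghost `A₀₁`, curvature `F = dA₁₀`, with `E = dA₀₁`) and a
free 2-form gauge field `B₂₀` (ghosts `B₁₁`, `B₀₂`, curvature `H = dB₂₀`, with
`K = dB₁₁`, `L = dB₀₂`), realized as `MvPolynomial (Fin 5) ℚ ⊗ ExteriorAlgebra ℚ (Fin 5 → ℚ)`
with even generators `B₂₀, B₁₁, B₀₂, F, E` (polynomial variables `0,…,4`) and odd
generators `A₁₀, A₀₁, H, K, L` (exterior generators `0,…,4`).  The unique odd derivations
`d` (with `dA₁₀ = F`, `dA₀₁ = E`, `dB₂₀ = H`, `dB₁₁ = K`, `dB₀₂ = L`, zero on curvatures)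
and `γ` (with `γA₁₀ = −E`, `γB₂₀ = −K`, `γB₁₁ = −L`, zero on the other generators) are
built from partial derivatives, contractions and multiplications. -/

open TensorProduct

noncomputable section

/-- The small algebra `A = ℚ[B₂₀, B₁₁, B₀₂, F, E] ⊗ Λ(A₁₀, A₀₁, H, K, L)`. -/
abbrev SmallAlg : Type :=
  MvPolynomial (Fin 5) ℚ ⊗[ℚ] ExteriorAlgebra ℚ (Fin 5 → ℚ)

/-- The even generators (as elements of the small algebra). -/
def evGen (i : Fin 5) : SmallAlg := (MvPolynomial.X i) ⊗ₜ[ℚ] 1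

/-- The odd generators (as elements of the small algebra). -/
def odGen (i : Fin 5) : SmallAlg := 1 ⊗ₜ[ℚ] (ExteriorAlgebra.ι ℚ (Pi.single i 1))

def B20 : SmallAlg := evGen 0
def B11 : SmallAlg := evGen 1
def B02 : SmallAlg := evGen 2
def Fcur : SmallAlg := evGen 3
def Ecur : SmallAlg := evGen 4
def A10 : SmallAlg := odGen 0
def A01 : SmallAlg := odGen 1
def Hcur : SmallAlg := odGen 2
def Kcur : SmallAlg := odGen 3
def Lcur : SmallAlg := odGen 4

/-- The coordinate functional dual to the `i`-th exterior generator. -/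
def coordφ (i : Fin 5) : Module.Dual ℚ (Fin 5 → ℚ) := LinearMap.proj i

/-- The elementary odd derivation sending the odd generator `i` to the even generator `j`
(and all other generators to zero): `X j · ∂/∂(θ i)`. -/
def odToEv (i j : Fin 5) : SmallAlg →ₗ[ℚ] SmallAlg :=
  TensorProduct.map (LinearMap.mulLeft ℚ (MvPolynomial.X j))
    (CliffordAlgebra.contractLeft (Q := (0 : QuadraticForm ℚ (Fin 5 → ℚ))) (coordφ i))

/-- The elementary odd derivation sending the even generator `i` to the odd generator `j`
(and all other generators to zero): `θ j · ∂/∂(x i)`. -/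
def evToOd (i j : Fin 5) : SmallAlg →ₗ[ℚ] SmallAlg :=
  TensorProduct.map (MvPolynomial.pderiv i).toLinearMap
    (LinearMap.mulLeft ℚ (ExteriorAlgebra.ι ℚ (Pi.single j 1)))

/-- The odd derivation `d`: `dA₁₀ = F`, `dA₀₁ = E`, `dB₂₀ = H`, `dB₁₁ = K`, `dB₀₂ = L`,
`dF = dE = dH = dK = dL = 0`. -/
def dSmall : SmallAlg →ₗ[ℚ] SmallAlg :=
  odToEv 0 3 + odToEv 1 4 + evToOd 0 2 + evToOd 1 3 + evToOd 2 4

/-- The odd derivation `γ`: `γA₁₀ = −E`, `γA₀₁ = 0`, `γB₂₀ = −K`, `γB₁₁ = −L`,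
`γB₀₂ = 0`, `γF = γE = γH = γK = γL = 0`. -/
def γSmall : SmallAlg →ₗ[ℚ] SmallAlg :=
  -(odToEv 0 4 + evToOd 0 3 + evToOd 1 4)

/-!
Up to sign, `d` and `γ` are sums of maps of two kinds: a multiplication tensored with a contraction,
and a partial derivative tensored with an exterior multiplication. Both kinds obey the Leibniz rule
of an odd derivation, so `d` and `γ` can be computed from their values on generators. In the two
expansions all terms cancel in pairs except the term `F·B₀₂` coming from `dA₁₀ = F`.
-/

section TwistedDerivation

variable {R A : Type*} [CommSemiring R]

/-- A `σ`-twisted derivation, `D (x y) = (D x) y + σ(x) (D y)`. An odd derivation of a graded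
algebra is twisted by the parity automorphism `σ(x) = (-1)^|x| x`, which encodes the sign rule
without restricting `x` to homogeneous elements. -/
def IsTwistedDerivation [Semiring A] [Algebra R A] (σ : A →ₐ[R] A) (D : A →ₗ[R] A) : Prop :=
  ∀ x y, D (x * y) = D x * y + σ x * D y

namespace IsTwistedDerivation

theorem add [Semiring A] [Algebra R A] {σ : A →ₐ[R] A} {D D' : A →ₗ[R] A}
    (hD : IsTwistedDerivation σ D) (hD' : IsTwistedDerivation σ D') :
    IsTwistedDerivation σ (D + D') := fun x y => by
  simp only [LinearMap.add_apply, hD x y, hD' x y, add_mul, mul_add]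
  abel

variable [Ring A] [Algebra R A] {σ : A →ₐ[R] A} {D : A →ₗ[R] A}

theorem neg (hD : IsTwistedDerivation σ D) : IsTwistedDerivation σ (-D) := fun x y => by
  simp only [LinearMap.neg_apply, hD x y, neg_mul, mul_neg, neg_add]

theorem map_mul_of_odd (hD : IsTwistedDerivation σ D) {x : A} (hx : σ x = -x) (y : A) :
    D (x * y) = D x * y - x * D y := by
  rw [hD x y, hx, neg_mul, sub_eq_add_neg]

end IsTwistedDerivation

end TwistedDerivation

section TensorMap

variable {R P A : Type*} [CommSemiring R] [Semiring A] [Algebra R A]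

theorem isTwistedDerivation_of_tmul [Semiring P] [Algebra R P]
    {τ : P ⊗[R] A →ₐ[R] P ⊗[R] A} {D : P ⊗[R] A →ₗ[R] P ⊗[R] A}
    (h : ∀ p a q b, D ((p ⊗ₜ a) * (q ⊗ₜ b)) =
      D (p ⊗ₜ a) * (q ⊗ₜ b) + τ (p ⊗ₜ a) * D (q ⊗ₜ b)) :
    IsTwistedDerivation τ D := fun x y => by
  induction x with
  | zero => simp only [zero_mul, map_zero, add_zero]
  | add x₁ x₂ h₁ h₂ =>
    simp only [add_mul, map_add, h₁, h₂]
    abel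
  | tmul p a =>
    induction y with
    | zero => simp only [mul_zero, map_zero, add_zero]
    | add y₁ y₂ h₁ h₂ =>
      simp only [mul_add, map_add, h₁, h₂]
      abel
    | tmul q b => exact h p a q b

variable [CommSemiring P] [Algebra R P] {σ : A →ₐ[R] A}

theorem IsTwistedDerivation.map_mulLeft {D : A →ₗ[R] A} (hD : IsTwistedDerivation σ D) (p : P) :
    IsTwistedDerivation (Algebra.TensorProduct.map (AlgHom.id R P) σ)
      (TensorProduct.map (LinearMap.mulLeft R p) D) :=
  isTwistedDerivation_of_tmul fun q a r b => by
    simp only [Algebra.TensorProduct.tmul_mul_tmul, TensorProduct.map_tmul,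
      Algebra.TensorProduct.map_tmul, LinearMap.mulLeft_apply, AlgHom.id_apply, hD a b,
      TensorProduct.tmul_add, mul_assoc, mul_left_comm q p r]

theorem isTwistedDerivation_map_derivation_mulLeft (δ : Derivation R P P) {θ : A}
    (hθ : ∀ a, θ * a = σ a * θ) :
    IsTwistedDerivation (Algebra.TensorProduct.map (AlgHom.id R P) σ)
      (TensorProduct.map δ.toLinearMap (LinearMap.mulLeft R θ)) :=
  isTwistedDerivation_of_tmul fun p a q b => by
    have hδ : δ (p * q) = δ p * q + p * δ q := by
      rw [δ.leibniz, smul_eq_mul, smul_eq_mul, add_comm, mul_comm q]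
    have hθ_swap : σ a * (θ * b) = θ * (a * b) := by rw [← mul_assoc, ← hθ, mul_assoc]
    simp only [Algebra.TensorProduct.tmul_mul_tmul, TensorProduct.map_tmul,
      Algebra.TensorProduct.map_tmul, LinearMap.mulLeft_apply, AlgHom.id_apply,
      Derivation.coeFn_coe, hδ, TensorProduct.add_tmul, hθ_swap, mul_assoc]

end TensorMap

section ExteriorMul

variable {R M : Type*} [CommRing R] [AddCommGroup M] [Module R M]

theorem isTwistedDerivation_contractLeft {Q : QuadraticForm R M} (φ : Module.Dual R M) :
    IsTwistedDerivation CliffordAlgebra.involute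
      (CliffordAlgebra.contractLeft (Q := Q) φ) := fun x y => by
  induction x using CliffordAlgebra.left_induction generalizing y with
  | algebraMap r =>
    simp only [CliffordAlgebra.contractLeft_algebraMap_mul, CliffordAlgebra.contractLeft_algebraMap,
      AlgHom.commutes, zero_mul, zero_add]
  | add x₁ x₂ h₁ h₂ =>
    simp only [add_mul, map_add, h₁, h₂]
    abel
  | ι_mul x m h =>
    simp only [mul_assoc, CliffordAlgebra.contractLeft_ι_mul, h, map_mul,
      CliffordAlgebra.involute_ι, sub_mul, mul_add, smul_mul_assoc, neg_mul]
    abel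

theorem involute_exteriorAlgebra_ι (m : M) :
    CliffordAlgebra.involute (ExteriorAlgebra.ι R m) = -ExteriorAlgebra.ι R m :=
  CliffordAlgebra.involute_ι m

theorem ι_mul_eq_involute_mul_ι (m : M) (x : ExteriorAlgebra R M) :
    ExteriorAlgebra.ι R m * x = CliffordAlgebra.involute x * ExteriorAlgebra.ι R m := by
  induction x using ExteriorAlgebra.induction with
  | algebraMap r => rw [AlgHom.commutes, Algebra.commutes]
  | ι n =>
    rw [involute_exteriorAlgebra_ι, neg_mul,
      eq_neg_of_add_eq_zero_left (ExteriorAlgebra.ι_add_mul_swap m n)]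
  | mul x y hx hy => rw [map_mul, ← mul_assoc, hx, mul_assoc, hy, mul_assoc]
  | add x y hx hy => rw [map_add, mul_add, add_mul, hx, hy]

end ExteriorMul

/-- The parity automorphism `x ↦ (-1)^|x| x` of the small algebra: it fixes the even generators
and negates the odd ones. -/
def parity : SmallAlg →ₐ[ℚ] SmallAlg :=
  Algebra.TensorProduct.map (AlgHom.id ℚ (MvPolynomial (Fin 5) ℚ)) CliffordAlgebra.involute

theorem parity_odGen (i : Fin 5) : parity (odGen i) = -odGen i := by
  rw [parity, odGen, Algebra.TensorProduct.map_tmul, involute_exteriorAlgebra_ι, map_one,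
    TensorProduct.tmul_neg]

theorem isTwistedDerivation_odToEv (i j : Fin 5) : IsTwistedDerivation parity (odToEv i j) :=
  (isTwistedDerivation_contractLeft (coordφ i)).map_mulLeft (MvPolynomial.X j)

theorem isTwistedDerivation_evToOd (i j : Fin 5) : IsTwistedDerivation parity (evToOd i j) :=
  isTwistedDerivation_map_derivation_mulLeft (MvPolynomial.pderiv i) (ι_mul_eq_involute_mul_ι _)

theorem isTwistedDerivation_dSmall : IsTwistedDerivation parity dSmall :=
  ((((isTwistedDerivation_odToEv 0 3).add (isTwistedDerivation_odToEv 1 4)).add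
    (isTwistedDerivation_evToOd 0 2)).add (isTwistedDerivation_evToOd 1 3)).add
    (isTwistedDerivation_evToOd 2 4)

theorem isTwistedDerivation_γSmall : IsTwistedDerivation parity γSmall :=
  (((isTwistedDerivation_odToEv 0 4).add (isTwistedDerivation_evToOd 0 3)).add
    (isTwistedDerivation_evToOd 1 4)).neg

theorem odToEv_odGen (i j k : Fin 5) :
    odToEv i j (odGen k) = if i = k then evGen j else 0 := by
  have hcontract : CliffordAlgebra.contractLeft (Q := (0 : QuadraticForm ℚ (Fin 5 → ℚ))) (coordφ i)
      (ExteriorAlgebra.ι ℚ (Pi.single k 1)) = algebraMap ℚ _ (if i = k then 1 else 0) :=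
    (CliffordAlgebra.contractLeft_ι _ _ _).trans <|
      congrArg _ (Pi.single_apply k (1 : ℚ) i)
  rw [odToEv, odGen, TensorProduct.map_tmul, hcontract]
  split_ifs <;> simp [evGen]

theorem odToEv_evGen (i j k : Fin 5) : odToEv i j (evGen k) = 0 := by
  rw [odToEv, evGen, TensorProduct.map_tmul, CliffordAlgebra.contractLeft_one,
    TensorProduct.tmul_zero]

theorem evToOd_evGen (i j k : Fin 5) :
    evToOd i j (evGen k) = if i = k then odGen j else 0 := by
  rw [evToOd, evGen, TensorProduct.map_tmul, Derivation.coeFn_coe, MvPolynomial.pderiv_X]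
  rcases eq_or_ne i k with rfl | hik
  · simp [odGen]
  · simp [hik]

theorem evToOd_odGen (i j k : Fin 5) : evToOd i j (odGen k) = 0 := by
  rw [evToOd, odGen, TensorProduct.map_tmul, Derivation.coeFn_coe, Derivation.map_one_eq_zero,
    TensorProduct.zero_tmul]

theorem dSmall_A10 : dSmall A10 = Fcur := by
  simp [dSmall, A10, Fcur, odToEv_odGen, evToOd_odGen]

theorem dSmall_A01 : dSmall A01 = Ecur := by
  simp [dSmall, A01, Ecur, odToEv_odGen, evToOd_odGen]

theorem dSmall_B11 : dSmall B11 = Kcur := by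
  simp [dSmall, B11, Kcur, odToEv_evGen, evToOd_evGen]

theorem dSmall_B02 : dSmall B02 = Lcur := by
  simp [dSmall, B02, Lcur, odToEv_evGen, evToOd_evGen]

theorem γSmall_A10 : γSmall A10 = -Ecur := by
  simp [γSmall, A10, Ecur, odToEv_odGen, evToOd_odGen]

theorem γSmall_A01 : γSmall A01 = 0 := by
  simp [γSmall, A01, odToEv_odGen, evToOd_odGen]

theorem γSmall_B20 : γSmall B20 = -Kcur := by
  simp [γSmall, B20, Kcur, odToEv_evGen, evToOd_evGen]

theorem γSmall_B11 : γSmall B11 = -Lcur := by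
  simp [γSmall, B11, Lcur, odToEv_evGen, evToOd_evGen]

theorem γSmall_B02 : γSmall B02 = 0 := by
  simp [γSmall, B02, odToEv_evGen, evToOd_evGen]

theorem dSmall_A10_mul (x : SmallAlg) : dSmall (A10 * x) = Fcur * x - A10 * dSmall x :=
  dSmall_A10 ▸ isTwistedDerivation_dSmall.map_mul_of_odd (parity_odGen 0) x

theorem dSmall_A01_mul (x : SmallAlg) : dSmall (A01 * x) = Ecur * x - A01 * dSmall x :=
  dSmall_A01 ▸ isTwistedDerivation_dSmall.map_mul_of_odd (parity_odGen 1) x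

theorem γSmall_A10_mul (x : SmallAlg) : γSmall (A10 * x) = -(Ecur * x) - A10 * γSmall x := by
  rw [← neg_mul Ecur x, ← γSmall_A10]
  exact isTwistedDerivation_γSmall.map_mul_of_odd (parity_odGen 0) x

theorem γSmall_A01_mul (x : SmallAlg) : γSmall (A01 * x) = -(A01 * γSmall x) := by
  rw [← zero_sub, ← zero_mul x, ← γSmall_A01]
  exact isTwistedDerivation_γSmall.map_mul_of_odd (parity_odGen 1) x

/-- in `A` one has `γ(A₁₀B₀₂ + A₀₁B₁₁) + d(A₀₁B₀₂) = 0`, and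
`d(A₁₀B₀₂ + A₀₁B₁₁) + γ(A₁₀B₁₁ + A₀₁B₂₀) = F·B₀₂`.  (Thus the ghost-number-three
γ-cocycle `A₀₁B₀₂` can be lifted once, and the obstruction to lifting it a second time is
the nontrivial γ-cocycle `F·B₀₂`.) -/
theorem statement15 :
    γSmall (A10 * B02 + A01 * B11) + dSmall (A01 * B02) = 0 ∧
    dSmall (A10 * B02 + A01 * B11) + γSmall (A10 * B11 + A01 * B20) = Fcur * B02 := by
  constructor
  · calc γSmall (A10 * B02 + A01 * B11) + dSmall (A01 * B02)
        = (-(Ecur * B02) + A01 * Lcur) + (Ecur * B02 - A01 * Lcur) := by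
          simp only [map_add, γSmall_A10_mul, γSmall_A01_mul, dSmall_A01_mul, γSmall_B02,
            γSmall_B11, dSmall_B02, mul_zero, sub_zero, mul_neg A01 Lcur, neg_neg]
      _ = 0 := by abel
  · calc dSmall (A10 * B02 + A01 * B11) + γSmall (A10 * B11 + A01 * B20)
        = (Fcur * B02 - A10 * Lcur + (Ecur * B11 - A01 * Kcur)) +
            (-(Ecur * B11) + A10 * Lcur + A01 * Kcur) := by
          simp only [map_add, dSmall_A10_mul, dSmall_A01_mul, γSmall_A10_mul, γSmall_A01_mul,
            dSmall_B02, dSmall_B11, γSmall_B11, γSmall_B20, mul_neg A10 Lcur,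
            mul_neg A01 Kcur, neg_neg, sub_neg_eq_add]
      _ = Fcur * B02 := by abel

end
end
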